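/- Let C := n − U be the size of the dominating set produced by Rule 2 on the random unit disk graph G_n. Then there exists a constant K > 0 such that for all sufficiently large n, E(C) ≤ K·n/(log log n)^{3/2}. -/

import Mathlib

open MeasureTheory Real Set
open scoped ENNReal

noncomputable section

/-- The Euclidean plane ℝ². -/
abbrev Plane := EuclideanSpace ℝ (Fin 2)

/-- The square region `Q = [0, ℓ]²`. -/
def square (ℓ : ℝ) : Set Plane := {p | p 0 ∈ Set.Icc 0 ℓ ∧ p 1 ∈ Set.Icc 0 ℓ}

/-- The uniform probability measure on the square `[0, ℓ]²`. -/
def unifSq (ℓ : ℝ) : Measure Plane := (volume (square ℓ))⁻¹ • volume.restrict (square ℓ)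

/-- The joint law of `n` points `V₁, …, V_n` chosen independently and uniformly at random from
the square `[0, ℓ]²`. -/
def gMeasure (n : ℕ) (ℓ : ℝ) : Measure (Fin n → Plane) := Measure.pi fun _ => unifSq ℓ

/-- The (closed) neighborhood `N(i)` of vertex `i` in the unit disk graph on the points
`ω 0, …, ω (n-1)`: the vertex `i` together with all vertices adjacent to it. -/
def nbhd {n : ℕ} (ω : Fin n → Plane) (i : Fin n) : Set (Fin n) :=
  {j | j = i ∨ (j ≠ i ∧ dist (ω i) (ω j) ≤ 1)}

/-- Vertex `i` is pruned by Rule 2: there are `i₁ > i₂ > i` with `i₁, i₂ ∈ N(i)`, `i₁`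
adjacent to `i₂`, and `N(i) ⊆ N(i₁) ∪ N(i₂)`. (Here vertex IDs are ordered as the indices.) -/
def Pruned {n : ℕ} (ω : Fin n → Plane) (i : Fin n) : Prop :=
  ∃ i₁ i₂ : Fin n, i < i₂ ∧ i₂ < i₁ ∧ i₁ ∈ nbhd ω i ∧ i₂ ∈ nbhd ω i ∧
    dist (ω i₁) (ω i₂) ≤ 1 ∧ nbhd ω i ⊆ nbhd ω i₁ ∪ nbhd ω i₂

/-- `U` is the number of vertices pruned by Rule 2. -/
def U (n : ℕ) (ω : Fin n → Plane) : ℕ := Set.ncard {i : Fin n | Pruned ω i}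

/-!
A pair of neighbours of a vertex `i` prunes `i` unless some sample point falls into the part of the
unit disk around `V_i` that the unit disks around the pair leave uncovered. If the two neighbours
lie at distance about `ε` from `V_i`, in opposite directions up to an angle `O(ε)`, then this part
has area only `O(ε ^ 3)`, so a given such pair is spoiled with probability `O(n ε ^ 3 / ℓ ^ 2)`.
On the other hand, among the `2M` vertices following `i`, the second moment method yields about
`M ^ 2 ε ^ 5 / ℓ ^ 4` such pairs. By Markov's inequality it is then unlikely that all of them are
spoiled. Choosing `M` and `ε` so that the error terms balance, all but a fraction
`O((ℓ ^ 2 / n) ^ (1 / 14))` of the vertices are pruned in expectation.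
-/

theorem measureReal_mul_le_prod_measureReal {X Y : Type*} [MeasurableSpace X] [MeasurableSpace Y]
    {ν : Measure X} {ν' : Measure Y} [IsFiniteMeasure ν] [IsFiniteMeasure ν'] {G : Set (X × Y)}
    (hG : MeasurableSet G) {S : Set X} {c : ℝ}
    (h : ∀ x ∈ S, c ≤ ν'.real {y | (x, y) ∈ G}) :
    ν.real S * c ≤ (ν.prod ν').real G := by
  have hc : ∀ x ∈ S, ENNReal.ofReal c ≤ ν' (Prod.mk x ⁻¹' G) := fun x hx =>
    ENNReal.ofReal_le_of_le_toReal (h x hx)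
  refine (ENNReal.ofReal_le_iff_le_toReal (measure_ne_top _ _)).1 ?_
  rw [mul_comm, ENNReal.ofReal_mul' measureReal_nonneg, ofReal_measureReal, Measure.prod_apply hG]
  calc ENNReal.ofReal c * ν S
      ≤ ENNReal.ofReal c * ν {x | ENNReal.ofReal c ≤ ν' (Prod.mk x ⁻¹' G)} := by
        gcongr
        exact hc
    _ ≤ ∫⁻ x, ν' (Prod.mk x ⁻¹' G) ∂ν :=
        mul_meas_ge_le_lintegral (measurable_measure_prodMk_left hG) _

section Resampling

variable {ι : Type*} [Fintype ι] [DecidableEq ι] {X : ι → Type*} [∀ i, MeasurableSpace (X i)]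
  {μ : ∀ i, Measure (X i)} [∀ i, IsProbabilityMeasure (μ i)]

theorem lintegral_pi_eq_lintegral_lintegral_update (i : ι) {f : (∀ j, X j) → ℝ≥0∞}
    (hf : Measurable f) :
    ∫⁻ ω, f ω ∂Measure.pi μ = ∫⁻ ω, ∫⁻ x, f (Function.update ω i x) ∂μ i ∂Measure.pi μ := by
  have hf' : Measurable fun ω => ∫⁻ x, f (Function.update ω i x) ∂μ i :=
    (hf.comp measurable_update').lintegral_prod_right'
  rcases isEmpty_or_nonempty (∀ j, X j) with _ | ⟨⟨ω₀⟩⟩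
  · simp
  rw [lintegral_eq_lmarginal_univ ω₀, lintegral_eq_lmarginal_univ ω₀,
    lmarginal_erase' _ hf (Finset.mem_univ i), lmarginal_erase' _ hf' (Finset.mem_univ i)]
  simp

theorem measure_pi_eq_lintegral_update (i : ι) {S : Set (∀ j, X j)} (hS : MeasurableSet S) :
    Measure.pi μ S = ∫⁻ ω, μ i {x | Function.update ω i x ∈ S} ∂Measure.pi μ := by
  rw [← lintegral_indicator_one hS,
    lintegral_pi_eq_lintegral_lintegral_update i (measurable_one.indicator hS)]
  exact lintegral_congr fun ω => lintegral_indicator_one (measurable_update ω hS)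

theorem measure_pi_eq_lintegral_update_symm (i : ι) {S : Set (∀ j, X j)} (hS : MeasurableSet S) :
    Measure.pi μ S = ∫⁻ x, Measure.pi μ {ω | Function.update ω i x ∈ S} ∂μ i := by
  rw [← lintegral_indicator_one hS,
    lintegral_pi_eq_lintegral_lintegral_update i (measurable_one.indicator hS),
    lintegral_lintegral_swap]
  · exact lintegral_congr fun x => lintegral_indicator_one (measurable_update_left hS)
  · exact ((measurable_one.indicator hS).comp measurable_update').aemeasurable

theorem measureReal_pi_inter_le (i : ι) {S T : Set (∀ j, X j)} (hS : MeasurableSet S)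
    (hT : MeasurableSet T) (hSi : ∀ ω x, Function.update ω i x ∈ S ↔ ω ∈ S) {r : ℝ}
    (hr : 0 ≤ r) (h : ∀ ω ∈ S, (μ i).real {x | Function.update ω i x ∈ T} ≤ r) :
    (Measure.pi μ).real (S ∩ T) ≤ (Measure.pi μ).real S * r := by
  refine ENNReal.toReal_le_of_le_ofReal (by positivity) ?_
  rw [ENNReal.ofReal_mul measureReal_nonneg, ofReal_measureReal, mul_comm,
    ← lintegral_indicator_const hS, measure_pi_eq_lintegral_update i (hS.inter hT)]
  refine lintegral_mono fun ω => ?_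
  simp only [mem_inter_iff, hSi]
  by_cases hω : ω ∈ S
  · simpa [hω] using ENNReal.le_ofReal_iff_toReal_le (measure_ne_top _ _) hr |>.2 (h ω hω)
  · simp [hω]

theorem measureReal_pi_le_add (i : ι) {S : Set (∀ j, X j)} (hS : MeasurableSet S)
    {T : Set (X i)} {r : ℝ} (hr : 0 ≤ r)
    (h : ∀ x ∉ T, (Measure.pi μ).real {ω | Function.update ω i x ∈ S} ≤ r) :
    (Measure.pi μ).real S ≤ (μ i).real T + r := by
  refine ENNReal.toReal_le_of_le_ofReal (by positivity) ?_
  rw [measure_pi_eq_lintegral_update_symm i hS, ENNReal.ofReal_add measureReal_nonneg hr,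
    ofReal_measureReal]
  calc ∫⁻ x, Measure.pi μ {ω | Function.update ω i x ∈ S} ∂μ i
      ≤ ∫⁻ x, T.indicator 1 x + ENNReal.ofReal r ∂μ i := by
        refine lintegral_mono fun x => ?_
        by_cases hx : x ∈ T
        · simpa [hx] using prob_le_one.trans le_self_add
        · simpa [hx] using ENNReal.le_ofReal_iff_toReal_le (measure_ne_top _ _) hr |>.2 (h x hx)
    _ = ∫⁻ x, T.indicator 1 x ∂μ i + ENNReal.ofReal r := by
        rw [lintegral_add_right _ measurable_const, lintegral_const, measure_univ, mul_one]
    _ ≤ μ i T + ENNReal.ofReal r := by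
        gcongr
        exact (lintegral_indicator_le _ _).trans_eq (by simp)

end Resampling

section SecondMoment

open ProbabilityTheory

variable {Ω κ : Type*} [MeasurableSpace Ω] {P : Measure Ω}

theorem memLp_indicator_one [IsFiniteMeasure P] {A : Set Ω} (hA : MeasurableSet A) (p : ℝ≥0∞) :
    MemLp (A.indicator (1 : Ω → ℝ)) p P :=
  memLp_indicator_const p hA (1 : ℝ) (.inr (measure_ne_top P A))

theorem integral_sum_indicator_one [IsFiniteMeasure P] (s : Finset κ) {E : κ → Set Ω}
    (hE : ∀ p, MeasurableSet (E p)) :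
    ∫ ω, ∑ p ∈ s, (E p).indicator (1 : Ω → ℝ) ω ∂P = ∑ p ∈ s, P.real (E p) := by
  rw [integral_finsetSum _ fun p _ => memLp_one_iff_integrable.1 (memLp_indicator_one (hE p) 1)]
  exact Finset.sum_congr rfl fun p _ => integral_indicator_one (hE p)

variable [IsProbabilityMeasure P] (s : Finset κ) {E F : κ → Set Ω}

theorem variance_sum_indicator_one (hE : ∀ p, MeasurableSet (E p)) :
    Var[fun ω => ∑ p ∈ s, (E p).indicator (1 : Ω → ℝ) ω; P] =
      ∑ p ∈ s, ∑ q ∈ s, (P.real (E p ∩ E q) - P.real (E p) * P.real (E q)) := by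
  rw [variance_fun_sum' fun p _ => memLp_indicator_one (hE p) 2]
  refine Finset.sum_congr rfl fun p _ => Finset.sum_congr rfl fun q _ => ?_
  rw [covariance_eq_sub (memLp_indicator_one (hE p) 2) (memLp_indicator_one (hE q) 2),
    ← inter_indicator_one, integral_indicator_one (hE p), integral_indicator_one (hE q),
    integral_indicator_one ((hE p).inter (hE q))]

theorem measureReal_forall_mem_imp_mem_le (hE : ∀ p, MeasurableSet (E p))
    (hF : ∀ p, MeasurableSet (F p)) (hpos : 0 < ∑ p ∈ s, P.real (E p)) :
    P.real {ω | ∀ p ∈ s, ω ∈ E p → ω ∈ F p} ≤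
      4 * Var[fun ω => ∑ p ∈ s, (E p).indicator (1 : Ω → ℝ) ω; P] / (∑ p ∈ s, P.real (E p)) ^ 2
        + 2 * (∑ p ∈ s, P.real (E p ∩ F p)) / ∑ p ∈ s, P.real (E p) := by
  let N (ω : Ω) : ℝ := ∑ p ∈ s, (E p).indicator 1 ω
  let N' (ω : Ω) : ℝ := ∑ p ∈ s, (E p ∩ F p).indicator 1 ω
  set m := ∑ p ∈ s, P.real (E p)
  have hEF p : MeasurableSet (E p ∩ F p) := (hE p).inter (hF p)
  have mean_N : ∫ ω, N ω ∂P = m := integral_sum_indicator_one s hE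
  have chebyshev : P.real {ω | m / 2 ≤ |N ω - ∫ ω, N ω ∂P|} ≤ 4 * Var[N; P] / m ^ 2 := by
    refine (ENNReal.toReal_le_of_le_ofReal (div_nonneg (variance_nonneg N P) (by positivity))
      (meas_ge_le_variance_div_sq (memLp_finsetSum s fun p _ => memLp_indicator_one (hE p) 2)
        (half_pos hpos))).trans_eq ?_
    ring
  have markov : P.real {ω | m / 2 ≤ N' ω} ≤ 2 * (∑ p ∈ s, P.real (E p ∩ F p)) / m := by
    have := mul_meas_ge_le_integral_of_nonneg (μ := P) (f := N')
      (.of_forall fun ω => Finset.sum_nonneg fun p _ => indicator_nonneg (by simp) ω)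
      (integrable_finsetSum _ fun p _ =>
        memLp_one_iff_integrable.1 (memLp_indicator_one (hEF p) 1)) (m / 2)
    rw [integral_sum_indicator_one s hEF] at this
    rw [le_div_iff₀ hpos]
    linarith
  refine (measureReal_mono fun ω hω => ?_).trans
    ((measureReal_union_le _ _).trans (add_le_add chebyshev markov))
  -- The means of `N` and `N'` differ, so `N = N'` forces one of them far away from its mean.
  have N_eq_N' : N ω = N' ω := Finset.sum_congr rfl fun p hp => by
    by_cases h : ω ∈ E p <;> simp [h, hω p hp]
  rcases le_or_gt (m / 2) (N' ω) with h | h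
  · exact .inr h
  · refine .inl ?_
    rw [mem_ofPred_eq, mean_N, N_eq_N', abs_sub_comm]
    exact le_abs.2 (.inl (by linarith))

end SecondMoment

section Pairs

open ProbabilityTheory

variable {ι X : Type*}

/-- The event that the pair of sample points indexed by `p` lies in `G`. -/
def pairEvent (G : Set (X × X)) (p : ι × ι) : Set (ι → X) := {ω | (ω p.1, ω p.2) ∈ G}

/-- The event that some sample point other than the two indexed by `p` is related to these two
by `R`. -/
def hitEvent (R : Set ((X × X) × X)) (p : ι × ι) : Set (ι → X) :=
  {ω | ∃ k, k ≠ p.1 ∧ k ≠ p.2 ∧ ((ω p.1, ω p.2), ω k) ∈ R}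

theorem update_mem_pairEvent [DecidableEq ι] {G : Set (X × X)} {p : ι × ι} {i : ι} (h₁ : i ≠ p.1)
    (h₂ : i ≠ p.2) (ω : ι → X) (x : X) :
    Function.update ω i x ∈ pairEvent G p ↔ ω ∈ pairEvent G p := by
  simp [pairEvent, h₁.symm, h₂.symm]

variable [MeasurableSpace X] {G : Set (X × X)} {R : Set ((X × X) × X)}

theorem measurableSet_pairEvent (hG : MeasurableSet G) (p : ι × ι) :
    MeasurableSet (pairEvent G p) :=
  ((measurable_pi_apply p.1).prodMk (measurable_pi_apply p.2)) hG

theorem measurableSet_hitEvent [Countable ι] (hR : MeasurableSet R) (p : ι × ι) :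
    MeasurableSet (hitEvent R p) := by
  simp only [hitEvent, ofPred_exists, ofPred_and]
  refine .iUnion fun k => .inter (.const _) (.inter (.const _) ?_)
  exact (((measurable_pi_apply p.1).prodMk (measurable_pi_apply p.2)).prodMk
    (measurable_pi_apply k)) hR

variable [Fintype ι] {μ : Measure X} [IsProbabilityMeasure μ]

theorem measureReal_pairEvent (hG : MeasurableSet G) {p : ι × ι} (hp : p.1 ≠ p.2) :
    (Measure.pi fun _ : ι => μ).real (pairEvent G p) = (μ.prod μ).real G := by
  have hmap : (Measure.pi fun _ : ι => μ).map (fun ω => (ω p.1, ω p.2)) = μ.prod μ := by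
    have hindep := (iIndepFun_pi (μ := fun _ : ι => μ) (X := fun _ x => x)
      fun _ => aemeasurable_id).indepFun hp
    rw [(indepFun_iff_map_prod_eq_prod_map_map (measurable_pi_apply p.1).aemeasurable
        (measurable_pi_apply p.2).aemeasurable).1 hindep,
      (measurePreserving_eval _ p.1).map_eq, (measurePreserving_eval _ p.2).map_eq]
  rw [← hmap, map_measureReal_apply (by fun_prop) hG]
  rfl

theorem measureReal_pairEvent_inter_of_disjoint (hG : MeasurableSet G) {p q : ι × ι}
    (hp : p.1 ≠ p.2) (hq : q.1 ≠ q.2) (h₁₁ : p.1 ≠ q.1) (h₁₂ : p.1 ≠ q.2) (h₂₁ : p.2 ≠ q.1)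
    (h₂₂ : p.2 ≠ q.2) :
    (Measure.pi fun _ : ι => μ).real (pairEvent G p ∩ pairEvent G q) =
      (μ.prod μ).real G * (μ.prod μ).real G := by
  have hindep := (iIndepFun_pi (μ := fun _ : ι => μ) (X := fun _ x => x)
    fun _ => aemeasurable_id).indepFun_prodMk_prodMk (by fun_prop) p.1 p.2 q.1 q.2 h₁₁ h₁₂ h₂₁ h₂₂
  have := hindep.measure_inter_preimage_eq_mul G G hG hG
  rw [← measureReal_pairEvent (ι := ι) hG hp]
  nth_rw 2 [measureReal_pairEvent hG hp]
  rw [← measureReal_pairEvent (ι := ι) hG hq]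
  exact (congrArg ENNReal.toReal this).trans ENNReal.toReal_mul

variable {τ ρ : ℝ}

theorem measureReal_pairEvent_inter_le_of_snd (hG : MeasurableSet G) (hτ : 0 ≤ τ)
    (hGτ : ∀ x, μ.real {y | (x, y) ∈ G} ≤ τ) {p q : ι × ι} (hp : p.1 ≠ p.2) (hq : q.1 ≠ q.2)
    (h₁ : q.2 ≠ p.1) (h₂ : q.2 ≠ p.2) :
    (Measure.pi fun _ : ι => μ).real (pairEvent G p ∩ pairEvent G q) ≤
      (μ.prod μ).real G * τ := by
  classical
  rw [← measureReal_pairEvent (ι := ι) hG hp]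
  refine measureReal_pi_inter_le q.2 (measurableSet_pairEvent hG p) (measurableSet_pairEvent hG q)
    (update_mem_pairEvent h₁ h₂) hτ fun ω _ => ?_
  simpa [pairEvent, hq] using hGτ (ω q.1)

theorem measureReal_pairEvent_inter_le_of_fst (hG : MeasurableSet G) (hτ : 0 ≤ τ)
    (hGτ : ∀ y, μ.real {x | (x, y) ∈ G} ≤ τ) {p q : ι × ι} (hp : p.1 ≠ p.2) (hq : q.1 ≠ q.2)
    (h₁ : q.1 ≠ p.1) (h₂ : q.1 ≠ p.2) :
    (Measure.pi fun _ : ι => μ).real (pairEvent G p ∩ pairEvent G q) ≤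
      (μ.prod μ).real G * τ := by
  classical
  rw [← measureReal_pairEvent (ι := ι) hG hp]
  refine measureReal_pi_inter_le q.1 (measurableSet_pairEvent hG p) (measurableSet_pairEvent hG q)
    (update_mem_pairEvent h₁ h₂) hτ fun ω _ => ?_
  simpa [pairEvent, hq.symm] using hGτ (ω q.2)

theorem measureReal_pairEvent_inter_hitEvent_le (hG : MeasurableSet G) (hR : MeasurableSet R)
    (hρ : 0 ≤ ρ) (hRρ : ∀ p ∈ G, μ.real {w | (p, w) ∈ R} ≤ ρ) {p : ι × ι} (hp : p.1 ≠ p.2) :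
    (Measure.pi fun _ : ι => μ).real (pairEvent G p ∩ hitEvent R p) ≤
      Fintype.card ι * ((μ.prod μ).real G * ρ) := by
  classical
  let hitBy (k : ι) : Set (ι → X) := {ω | ((ω p.1, ω p.2), ω k) ∈ R}
  have hmeas k : MeasurableSet (hitBy k) :=
    (((measurable_pi_apply p.1).prodMk (measurable_pi_apply p.2)).prodMk
      (measurable_pi_apply k)) hR
  have hitBy_le (k : ι) (h₁ : k ≠ p.1) (h₂ : k ≠ p.2) :
      (Measure.pi fun _ : ι => μ).real (pairEvent G p ∩ hitBy k) ≤ (μ.prod μ).real G * ρ := by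
    rw [← measureReal_pairEvent (ι := ι) hG hp]
    refine measureReal_pi_inter_le k (measurableSet_pairEvent hG p) (hmeas k)
      (update_mem_pairEvent h₁ h₂) hρ fun ω hω => ?_
    simpa [hitBy, h₁.symm, h₂.symm] using hRρ _ hω
  let others : Finset ι := {k | k ≠ p.1 ∧ k ≠ p.2}
  have inter_subset : pairEvent G p ∩ hitEvent R p ⊆ ⋃ k ∈ others, pairEvent G p ∩ hitBy k := by
    rintro ω ⟨hω, k, h₁, h₂, hk⟩
    exact mem_biUnion (by simp [others, h₁, h₂]) ⟨hω, hk⟩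
  calc (Measure.pi fun _ : ι => μ).real (pairEvent G p ∩ hitEvent R p)
      ≤ ∑ k ∈ others, (Measure.pi fun _ : ι => μ).real (pairEvent G p ∩ hitBy k) :=
        (measureReal_mono inter_subset (measure_ne_top _ _)).trans
          (measureReal_biUnion_finset_le _ _)
    _ ≤ ∑ _ ∈ others, (μ.prod μ).real G * ρ := Finset.sum_le_sum fun _ hk =>
        hitBy_le _ (Finset.mem_filter.1 hk).2.1 (Finset.mem_filter.1 hk).2.2
    _ ≤ Fintype.card ι * ((μ.prod μ).real G * ρ) := by
        rw [Finset.sum_const, nsmul_eq_mul]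
        gcongr
        exact Finset.card_le_univ _

theorem measureReal_pairEvent_inter_sub_le [DecidableEq ι] (hG : MeasurableSet G) (hτ : 0 ≤ τ)
    (hGτ : ∀ x, μ.real {y | (x, y) ∈ G} ≤ τ) (hGτ' : ∀ y, μ.real {x | (x, y) ∈ G} ≤ τ)
    {a b a' b' : ι} (hab : a ≠ b) (hab' : a ≠ b') (ha'b : a' ≠ b) (ha'b' : a' ≠ b') :
    (Measure.pi fun _ : ι => μ).real (pairEvent G (a, b) ∩ pairEvent G (a', b')) -
        (Measure.pi fun _ : ι => μ).real (pairEvent G (a, b)) *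
          (Measure.pi fun _ : ι => μ).real (pairEvent G (a', b')) ≤
      (if a = a' then if b = b' then (μ.prod μ).real G else 0 else 0) +
        (if a = a' then (μ.prod μ).real G * τ else 0) +
        (if b = b' then (μ.prod μ).real G * τ else 0) := by
  rw [measureReal_pairEvent hG hab, measureReal_pairEvent hG ha'b']
  by_cases ha : a = a' <;> by_cases hb : b = b'
  · subst ha hb
    rw [inter_self, measureReal_pairEvent hG hab, if_pos rfl, if_pos rfl, if_pos rfl, if_pos rfl]
    nlinarith [mul_nonneg (measureReal_nonneg : 0 ≤ (μ.prod μ).real G) hτ]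
  · have := measureReal_pairEvent_inter_le_of_snd (μ := μ) (p := (a, b)) (q := (a', b')) hG hτ hGτ
      hab ha'b' hab'.symm (Ne.symm hb)
    rw [if_pos ha, if_pos ha, if_neg hb, if_neg hb]
    nlinarith
  · have := measureReal_pairEvent_inter_le_of_fst (μ := μ) (p := (a, b)) (q := (a', b')) hG hτ hGτ'
      hab ha'b' (Ne.symm ha) ha'b
    rw [if_neg ha, if_neg ha, if_pos hb]
    nlinarith
  · rw [measureReal_pairEvent_inter_of_disjoint hG hab ha'b' ha hab' ha'b.symm hb, if_neg ha,
      if_neg ha, if_neg hb]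
    simp

theorem sum_sum_measureReal_pairEvent_inter_sub_le (hG : MeasurableSet G) (hτ : 0 ≤ τ)
    (hGτ : ∀ x, μ.real {y | (x, y) ∈ G} ≤ τ) (hGτ' : ∀ y, μ.real {x | (x, y) ∈ G} ≤ τ)
    {A B : Finset ι} (hAB : Disjoint A B) :
    ∑ p ∈ A ×ˢ B, ∑ q ∈ A ×ˢ B,
        ((Measure.pi fun _ : ι => μ).real (pairEvent G p ∩ pairEvent G q) -
          (Measure.pi fun _ : ι => μ).real (pairEvent G p) *
            (Measure.pi fun _ : ι => μ).real (pairEvent G q)) ≤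
      A.card * B.card * ((μ.prod μ).real G * (1 + (A.card + B.card) * τ)) := by
  classical
  set θ := (μ.prod μ).real G
  have hne := Finset.disjoint_iff_ne.1 hAB
  simp only [Finset.sum_product]
  calc _ ≤ ∑ a ∈ A, ∑ b ∈ B, ∑ a' ∈ A, ∑ b' ∈ B,
        ((if a = a' then if b = b' then θ else 0 else 0) + (if a = a' then θ * τ else 0) +
          (if b = b' then θ * τ else 0)) :=
        Finset.sum_le_sum fun _ ha => Finset.sum_le_sum fun _ hb =>
          Finset.sum_le_sum fun _ ha' => Finset.sum_le_sum fun _ hb' =>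
            measureReal_pairEvent_inter_sub_le hG hτ hGτ hGτ' (hne _ ha _ hb) (hne _ ha _ hb')
              (hne _ ha' _ hb) (hne _ ha' _ hb')
    _ = ∑ _ ∈ A, ∑ _ ∈ B, (θ + B.card * (θ * τ) + A.card * (θ * τ)) :=
        Finset.sum_congr rfl fun _ ha => Finset.sum_congr rfl fun _ hb => by
          simp [Finset.sum_add_distrib, ha, hb]
    _ = A.card * B.card * (θ * (1 + (A.card + B.card) * τ)) := by
        simp only [Finset.sum_const, nsmul_eq_mul]
        ring

theorem measureReal_forall_pair_hit_le (hG : MeasurableSet G) (hR : MeasurableSet R) (hτ : 0 ≤ τ)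
    (hGτ : ∀ x, μ.real {y | (x, y) ∈ G} ≤ τ) (hGτ' : ∀ y, μ.real {x | (x, y) ∈ G} ≤ τ)
    (hρ : 0 ≤ ρ) (hRρ : ∀ p ∈ G, μ.real {w | (p, w) ∈ R} ≤ ρ) (hθ : 0 < (μ.prod μ).real G)
    {A B : Finset ι} (hA : A.Nonempty) (hB : B.Nonempty) (hAB : Disjoint A B) :
    (Measure.pi fun _ : ι => μ).real
        {ω | ∀ p ∈ A ×ˢ B, ω ∈ pairEvent G p → ω ∈ hitEvent R p} ≤
      4 * (1 + (A.card + B.card) * τ) / (A.card * B.card * (μ.prod μ).real G) +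
        2 * (Fintype.card ι * ρ) := by
  set θ := (μ.prod μ).real G
  have hne {p : ι × ι} (hp : p ∈ A ×ˢ B) : p.1 ≠ p.2 :=
    Finset.disjoint_iff_ne.1 hAB _ (Finset.mem_product.1 hp).1 _ (Finset.mem_product.1 hp).2
  have : (0 : ℝ) < A.card := mod_cast hA.card_pos
  have : (0 : ℝ) < B.card := mod_cast hB.card_pos
  have mean : ∑ p ∈ A ×ˢ B, (Measure.pi fun _ : ι => μ).real (pairEvent G p) =
      A.card * B.card * θ := by
    rw [Finset.sum_congr rfl fun p hp => measureReal_pairEvent hG (hne hp), Finset.sum_const,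
      Finset.card_product, nsmul_eq_mul, Nat.cast_mul]
  have mean_hit :
      ∑ p ∈ A ×ˢ B, (Measure.pi fun _ : ι => μ).real (pairEvent G p ∩ hitEvent R p) ≤
        A.card * B.card * (Fintype.card ι * (θ * ρ)) := by
    refine (Finset.sum_le_sum fun p hp =>
      measureReal_pairEvent_inter_hitEvent_le hG hR hρ hRρ (hne hp)).trans_eq ?_
    rw [Finset.sum_const, Finset.card_product, nsmul_eq_mul, Nat.cast_mul]
  refine (measureReal_forall_mem_imp_mem_le (A ×ˢ B) (measurableSet_pairEvent hG)
    (measurableSet_hitEvent hR) (mean ▸ by positivity)).trans ?_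
  rw [mean, variance_sum_indicator_one _ (measurableSet_pairEvent hG)]
  refine (add_le_add (div_le_div_of_nonneg_right (mul_le_mul_of_nonneg_left
    (sum_sum_measureReal_pairEvent_inter_sub_le hG hτ hGτ hGτ' hAB) zero_le_four) (by positivity))
    (div_le_div_of_nonneg_right (mul_le_mul_of_nonneg_left mean_hit zero_le_two)
      (by positivity))).trans_eq ?_
  simp only [show (μ.prod μ).real G = θ from rfl]
  field_simp

end Pairs

section OrthonormalFrames

variable {ι E : Type*} [Fintype ι] [NormedAddCommGroup E] [InnerProductSpace ℝ E]

theorem exists_orthonormalBasis_inner_eq_norm_mul_repr [FiniteDimensional ℝ E]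
    (hι : Module.finrank ℝ E = Fintype.card ι) (i : ι) (p : E) :
    ∃ f : OrthonormalBasis ι ℝ E, ∀ w, inner ℝ p w = ‖p‖ * f.repr w i := by
  rcases eq_or_ne p 0 with rfl | hp
  · obtain ⟨f, -⟩ := Orthonormal.exists_orthonormalBasis_extension_of_card_eq (𝕜 := ℝ) hι
      (v := fun _ => (0 : E)) (s := ∅) ⟨fun j => j.2.elim, fun j => j.2.elim⟩
    exact ⟨f, by simp⟩
  · have hp' : ‖p‖ ≠ 0 := norm_ne_zero_iff.2 hp
    obtain ⟨f, hf⟩ := Orthonormal.exists_orthonormalBasis_extension_of_card_eq (𝕜 := ℝ) hι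
      (v := fun _ => ‖p‖⁻¹ • p) (s := {i})
      ⟨fun _ => by simp [norm_smul, hp'], fun j k hjk => (hjk (Subsingleton.elim j k)).elim⟩
    refine ⟨f, fun w => ?_⟩
    rw [f.repr_apply_apply, hf i rfl, real_inner_smul_left, mul_inv_cancel_left₀ hp']

theorem norm_sq_eq_repr_sq_add (f : OrthonormalBasis (Fin 2) ℝ E) (w : E) :
    ‖w‖ ^ 2 = f.repr w 0 ^ 2 + f.repr w 1 ^ 2 := by
  rw [← f.repr.norm_map w, EuclideanSpace.real_norm_sq_eq, Fin.sum_univ_two]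

theorem inner_eq_repr_mul_add (f : OrthonormalBasis (Fin 2) ℝ E) (v w : E) :
    inner ℝ v w = f.repr v 0 * f.repr w 0 + f.repr v 1 * f.repr w 1 := by
  rw [← f.repr.inner_map_map v w, PiLp.inner_apply, Fin.sum_univ_two]
  simp [mul_comm]

variable [FiniteDimensional ℝ E] [MeasurableSpace E] [BorelSpace E]

theorem volume_setOf_forall_repr_mem (f : OrthonormalBasis ι ℝ E) {s : ι → Set ℝ}
    (hs : ∀ i, MeasurableSet (s i)) :
    volume {w | ∀ i, f.repr w i ∈ s i} = ∏ i, volume (s i) := by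
  rw [← volume_pi_pi]
  have := ((PiLp.volume_preserving_ofLp ι).comp
    f.measurePreserving_repr).measure_preimage (MeasurableSet.univ_pi hs).nullMeasurableSet
  rw [← this]
  congr 1
  ext w
  simp

theorem volume_setOf_repr_mem_Icc (f : OrthonormalBasis (Fin 2) ℝ E) {a b : ℝ} (hab : a ≤ b)
    (c d : ℝ) :
    volume {w : E | f.repr w 0 ∈ Icc a b ∧ f.repr w 1 ∈ Icc c d}
      = ENNReal.ofReal ((b - a) * (d - c)) := by
  have := volume_setOf_forall_repr_mem f (s := ![Icc a b, Icc c d])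
    (by simp [Fin.forall_fin_two, measurableSet_Icc])
  simpa [Fin.forall_fin_two, ENNReal.ofReal_mul (sub_nonneg.2 hab)] using this

end OrthonormalFrames

section NearlyAntipodal

variable {E : Type*} [NormedAddCommGroup E] [InnerProductSpace ℝ E] {ε : ℝ} {p q : E}

/-- `p` and `q` lie at distance of order `ε` from the origin, in directions that are opposite up
to an angle of order `ε`; the angle is measured by the Gram determinant. -/
structure NearlyAntipodal (ε : ℝ) (p q : E) : Prop where
  half_le_norm_left : ε / 2 ≤ ‖p‖
  norm_left_le : ‖p‖ ≤ ε
  half_le_norm_right : ε / 2 ≤ ‖q‖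
  norm_right_le : ‖q‖ ≤ ε
  inner_nonpos : inner ℝ p q ≤ 0
  gram_le : ‖p‖ ^ 2 * ‖q‖ ^ 2 - inner ℝ p q ^ 2 ≤ ε ^ 6

namespace NearlyAntipodal

theorem symm (h : NearlyAntipodal ε p q) : NearlyAntipodal ε q p where
  half_le_norm_left := h.half_le_norm_right
  norm_left_le := h.norm_right_le
  half_le_norm_right := h.half_le_norm_left
  norm_right_le := h.norm_left_le
  inner_nonpos := real_inner_comm q p ▸ h.inner_nonpos
  gram_le := by
    rw [real_inner_comm, mul_comm]
    exact h.gram_le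

theorem isClosed_setOf (ε : ℝ) : IsClosed {x : E × E | NearlyAntipodal ε x.1 x.2} := by
  have : {x : E × E | NearlyAntipodal ε x.1 x.2} =
      {x | ε / 2 ≤ ‖x.1‖} ∩ {x | ‖x.1‖ ≤ ε} ∩ {x | ε / 2 ≤ ‖x.2‖} ∩ {x | ‖x.2‖ ≤ ε} ∩
        {x | inner ℝ x.1 x.2 ≤ 0} ∩ {x | ‖x.1‖ ^ 2 * ‖x.2‖ ^ 2 - inner ℝ x.1 x.2 ^ 2 ≤ ε ^ 6} :=
    Set.ext fun x => ⟨fun ⟨h₁, h₂, h₃, h₄, h₅, h₆⟩ => ⟨⟨⟨⟨⟨h₁, h₂⟩, h₃⟩, h₄⟩, h₅⟩, h₆⟩,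
      fun ⟨⟨⟨⟨⟨h₁, h₂⟩, h₃⟩, h₄⟩, h₅⟩, h₆⟩ => ⟨h₁, h₂, h₃, h₄, h₅, h₆⟩⟩
  rw [this]
  repeat' apply IsClosed.inter
  all_goals exact isClosed_le (by fun_prop) (by fun_prop)

variable {f : OrthonormalBasis (Fin 2) ℝ E}

theorem abs_repr_one_le (h : NearlyAntipodal ε p q) (hε : 0 < ε)
    (hf : ∀ w, inner ℝ p w = ‖p‖ * f.repr w 0) : |f.repr q 1| ≤ 2 * ε ^ 2 := by
  refine abs_le_of_sq_le_sq ?_ (by positivity)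
  refine le_of_mul_le_mul_left (a := (ε / 2) ^ 2) ?_ (by positivity)
  calc (ε / 2) ^ 2 * f.repr q 1 ^ 2 ≤ ‖p‖ ^ 2 * f.repr q 1 ^ 2 := by
        gcongr
        exact h.half_le_norm_left
    _ = ‖p‖ ^ 2 * ‖q‖ ^ 2 - inner ℝ p q ^ 2 := by
        rw [hf, norm_sq_eq_repr_sq_add f q]
        ring
    _ ≤ ε ^ 6 := h.gram_le
    _ = (ε / 2) ^ 2 * (2 * ε ^ 2) ^ 2 := by ring

theorem repr_zero_le (h : NearlyAntipodal ε p q) (hε : 0 < ε) (hε' : ε ≤ 1 / 8)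
    (hf : ∀ w, inner ℝ p w = ‖p‖ * f.repr w 0) : f.repr q 0 ≤ -(ε / 4) := by
  have nonpos : f.repr q 0 ≤ 0 :=
    nonpos_of_mul_nonpos_right (hf q ▸ h.inner_nonpos)
      ((half_pos hε).trans_le h.half_le_norm_left)
  have norm_sq_ge : (ε / 2) ^ 2 ≤ f.repr q 0 ^ 2 + f.repr q 1 ^ 2 := by
    rw [← norm_sq_eq_repr_sq_add]
    gcongr
    exact h.half_le_norm_right
  have repr_one_sq_le : f.repr q 1 ^ 2 ≤ (2 * ε ^ 2) ^ 2 :=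
    sq_le_sq' (abs_le.1 (h.abs_repr_one_le hε hf)).1 (abs_le.1 (h.abs_repr_one_le hε hf)).2
  have : ε ^ 2 ≤ (1 / 8) ^ 2 := by gcongr
  have : (ε / 4) ^ 2 ≤ (-f.repr q 0) ^ 2 := by nlinarith
  linarith [le_of_sq_le_sq this (by linarith)]

end NearlyAntipodal

theorem two_mul_inner_lt_of_one_lt_norm_sub {w : E} (hwp : 1 < ‖w - p‖) :
    2 * inner ℝ p w < ‖w‖ ^ 2 - 1 + ‖p‖ ^ 2 := by
  have := norm_sub_sq_real w p
  rw [real_inner_comm] at this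
  nlinarith

theorem NearlyAntipodal.abs_repr_le_of_uncovered (h : NearlyAntipodal ε p q) (hε : 0 < ε)
    (hε' : ε ≤ 1 / 8) {f : OrthonormalBasis (Fin 2) ℝ E}
    (hf : ∀ w, inner ℝ p w = ‖p‖ * f.repr w 0) {w : E} (hw : ‖w‖ ≤ 1) (hwp : 1 < ‖w - p‖)
    (hwq : 1 < ‖w - q‖) :
    |f.repr w 0| ≤ 10 * ε ∧ |f.repr w 1| ≤ 1 ∧ 1 - 121 * ε ^ 2 ≤ |f.repr w 1| := by
  have hp₀ : 0 < ‖p‖ := (half_pos hε).trans_le h.half_le_norm_left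
  have norm_w_sq := norm_sq_eq_repr_sq_add f w
  have norm_w_sq_le : ‖w‖ ^ 2 ≤ 1 := pow_le_one₀ (norm_nonneg w) hw
  have inner_p_lt := two_mul_inner_lt_of_one_lt_norm_sub hwp
  have inner_q_lt := two_mul_inner_lt_of_one_lt_norm_sub hwq
  rw [hf] at inner_p_lt
  rw [inner_eq_repr_mul_add f] at inner_q_lt
  have norm_q_sq_le : ‖q‖ ^ 2 ≤ ε ^ 2 := pow_le_pow_left₀ (norm_nonneg q) h.norm_right_le 2
  have abs_one_le : |f.repr w 1| ≤ 1 :=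
    abs_le_of_sq_le_sq (by linarith [sq_nonneg (f.repr w 0)]) zero_le_one
  have zero_le : f.repr w 0 ≤ 10 * ε := by
    have : ‖p‖ * (2 * f.repr w 0) ≤ ‖p‖ * ‖p‖ := by linarith
    linarith [le_of_mul_le_mul_left this hp₀, h.norm_left_le]
  have le_zero : -(10 * ε) ≤ f.repr w 0 := by
    by_contra! hlt
    have := mul_le_mul (h.abs_repr_one_le hε hf) abs_one_le (abs_nonneg _) (by positivity)
    rw [← abs_mul] at this
    have : 10 * ε * (ε / 4) ≤ -f.repr w 0 * -f.repr q 0 :=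
      mul_le_mul (by linarith) (le_neg.1 (h.repr_zero_le hε hε' hf)) (by positivity) (by linarith)
    linarith [neg_abs_le (f.repr q 1 * f.repr w 1), sq_nonneg ε]
  refine ⟨abs_le.2 ⟨le_zero, zero_le⟩, abs_one_le, ?_⟩
  have zero_sq_le : f.repr w 0 ^ 2 ≤ (10 * ε) ^ 2 := sq_le_sq' le_zero zero_le
  have : ‖p‖ * -f.repr w 0 ≤ ε * (10 * ε) :=
    mul_le_mul_of_nonneg h.norm_left_le (by linarith) hp₀.le (by positivity)
  have norm_p_sq_le : ‖p‖ ^ 2 ≤ ε ^ 2 := pow_le_pow_left₀ (norm_nonneg p) h.norm_left_le 2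
  refine le_trans ?_ (pow_le_of_le_one (abs_nonneg _) abs_one_le two_ne_zero)
  rw [sq_abs]
  linarith

theorem exists_frame (p : Plane) :
    ∃ f : OrthonormalBasis (Fin 2) ℝ Plane, ∀ w, inner ℝ p w = ‖p‖ * f.repr w 0 :=
  exists_orthonormalBasis_inner_eq_norm_mul_repr (by simp) 0 p

theorem volume_nearlyAntipodal_le (hε : 0 < ε) (p : Plane) :
    volume {q | NearlyAntipodal ε p q} ≤ ENNReal.ofReal (8 * ε ^ 3) := by
  obtain ⟨f, hf⟩ := exists_frame p
  have subset_box : {q | NearlyAntipodal ε p q} ⊆ {w | f.repr w 0 ∈ Icc (-ε) ε ∧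
      f.repr w 1 ∈ Icc (-(2 * ε ^ 2)) (2 * ε ^ 2)} := fun q hq => by
    refine ⟨abs_le.1 (abs_le_of_sq_le_sq ?_ hε.le), abs_le.1 (hq.abs_repr_one_le hε hf)⟩
    calc f.repr q 0 ^ 2 ≤ ‖q‖ ^ 2 := by
          rw [norm_sq_eq_repr_sq_add f]
          exact le_add_of_nonneg_right (sq_nonneg _)
      _ ≤ ε ^ 2 := pow_le_pow_left₀ (norm_nonneg q) hq.norm_right_le 2
  refine (measure_mono subset_box).trans_eq ?_
  rw [volume_setOf_repr_mem_Icc f (by linarith)]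
  congr 1
  ring

theorem le_volume_nearlyAntipodal (hε : 0 < ε) (hε' : ε ≤ 1 / 8) {p : Plane}
    (hp : ε / 2 ≤ ‖p‖) (hp' : ‖p‖ ≤ ε) :
    ENNReal.ofReal (ε ^ 3 / 2) ≤ volume {q | NearlyAntipodal ε p q} := by
  obtain ⟨f, hf⟩ := exists_frame p
  have box_subset : {w | f.repr w 0 ∈ Icc (-(3 / 4 * ε)) (-(ε / 2)) ∧
      f.repr w 1 ∈ Icc (-ε ^ 2) (ε ^ 2)} ⊆ {q | NearlyAntipodal ε p q} := by
    rintro q ⟨⟨h₀, h₀'⟩, h₁, h₁'⟩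
    have norm_q_sq := norm_sq_eq_repr_sq_add f q
    have : ε ^ 2 ≤ (1 / 8) ^ 2 := by gcongr
    have one_sq_le : f.repr q 1 ^ 2 ≤ ε ^ 4 := by nlinarith
    have : ε ^ 4 ≤ ε ^ 2 / 64 := by nlinarith [sq_nonneg ε]
    exact {
      half_le_norm_left := hp
      norm_left_le := hp'
      half_le_norm_right :=
        le_of_sq_le_sq (by nlinarith [sq_nonneg (f.repr q 1)]) (norm_nonneg q)
      norm_right_le := le_of_sq_le_sq (by nlinarith) hε.le
      inner_nonpos := by
        rw [hf]
        exact mul_nonpos_of_nonneg_of_nonpos (norm_nonneg p) (by linarith)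
      gram_le := calc
        ‖p‖ ^ 2 * ‖q‖ ^ 2 - inner ℝ p q ^ 2 = ‖p‖ ^ 2 * f.repr q 1 ^ 2 := by
          rw [hf, norm_q_sq]
          ring
        _ ≤ ε ^ 2 * ε ^ 4 := by gcongr
        _ = ε ^ 6 := by ring }
  refine (measure_mono box_subset).trans_eq' ?_
  rw [volume_setOf_repr_mem_Icc f (by linarith)]
  congr 1
  ring

theorem NearlyAntipodal.volume_uncovered_le {p q : Plane} (h : NearlyAntipodal ε p q) (hε : 0 < ε)
    (hε' : ε ≤ 1 / 8) :
    volume {w : Plane | ‖w‖ ≤ 1 ∧ 1 < ‖w - p‖ ∧ 1 < ‖w - q‖} ≤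
      ENNReal.ofReal (4840 * ε ^ 3) := by
  obtain ⟨f, hf⟩ := exists_frame p
  have subset_boxes : {w : Plane | ‖w‖ ≤ 1 ∧ 1 < ‖w - p‖ ∧ 1 < ‖w - q‖} ⊆
      {w | f.repr w 0 ∈ Icc (-(10 * ε)) (10 * ε) ∧ f.repr w 1 ∈ Icc (1 - 121 * ε ^ 2) 1} ∪
      {w | f.repr w 0 ∈ Icc (-(10 * ε)) (10 * ε) ∧
        f.repr w 1 ∈ Icc (-1) (-(1 - 121 * ε ^ 2))} := by
    rintro w ⟨hw, hwp, hwq⟩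
    obtain ⟨h₀, h₁, h₁'⟩ := h.abs_repr_le_of_uncovered hε hε' hf hw hwp hwq
    rcases le_total 0 (f.repr w 1) with hs | hs
    · rw [abs_of_nonneg hs] at h₁ h₁'
      exact .inl ⟨abs_le.1 h₀, h₁', h₁⟩
    · rw [abs_of_nonpos hs] at h₁ h₁'
      exact .inr ⟨abs_le.1 h₀, neg_le.1 h₁, le_neg.1 h₁'⟩
  refine (measure_mono subset_boxes).trans ((measure_union_le _ _).trans_eq ?_)
  rw [volume_setOf_repr_mem_Icc f (by linarith), volume_setOf_repr_mem_Icc f (by linarith),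
    ← ENNReal.ofReal_add (by nlinarith [pow_pos hε 3]) (by nlinarith [pow_pos hε 3])]
  congr 1
  ring

end NearlyAntipodal

section UniformSquare

variable {ℓ ε : ℝ}

theorem volume_setOf_coord_mem_Icc {a b : ℝ} (hab : a ≤ b) (c d : ℝ) :
    volume {p : Plane | p 0 ∈ Icc a b ∧ p 1 ∈ Icc c d} =
      ENNReal.ofReal ((b - a) * (d - c)) := by
  simpa only [EuclideanSpace.basisFun_repr] using
    volume_setOf_repr_mem_Icc (EuclideanSpace.basisFun (Fin 2) ℝ) hab c d

theorem volume_setOf_sub_mem (S : Set Plane) (x : Plane) : volume {y | y - x ∈ S} = volume S :=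
  (measurePreserving_sub_right volume x).measure_preimage_equiv
    (f := MeasurableEquiv.subRight x) S

theorem volume_square (hℓ : 0 < ℓ) : volume (square ℓ) = ENNReal.ofReal (ℓ ^ 2) := by
  rw [square, volume_setOf_coord_mem_Icc hℓ.le, sub_zero, sq]

theorem isProbabilityMeasure_unifSq (hℓ : 0 < ℓ) : IsProbabilityMeasure (unifSq ℓ) := by
  refine ProbabilityTheory.cond_isProbabilityMeasure_of_finite ?_ ?_ <;> rw [volume_square hℓ]
  · exact (ENNReal.ofReal_pos.2 (by positivity)).ne'
  · exact ENNReal.ofReal_ne_top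

theorem unifSq_real_le_of_volume_le (hℓ : 0 < ℓ) {S : Set Plane} {v : ℝ} (hv : 0 ≤ v)
    (hS : volume S ≤ ENNReal.ofReal v) : (unifSq ℓ).real S ≤ v / ℓ ^ 2 := by
  refine ENNReal.toReal_le_of_le_ofReal (by positivity) ?_
  rw [unifSq, Measure.smul_apply, smul_eq_mul, volume_square hℓ, mul_comm, ← div_eq_mul_inv,
    ENNReal.ofReal_div_of_pos (by positivity)]
  gcongr
  exact (Measure.restrict_le_self S).trans hS

theorem le_unifSq_real_of_le_volume (hℓ : 0 < ℓ) {S : Set Plane} (hSℓ : S ⊆ square ℓ) {v : ℝ}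
    (hS : ENNReal.ofReal v ≤ volume S) : v / ℓ ^ 2 ≤ (unifSq ℓ).real S := by
  have := isProbabilityMeasure_unifSq hℓ
  refine (ENNReal.ofReal_le_iff_le_toReal (measure_ne_top _ _)).1 ?_
  rw [unifSq, Measure.smul_apply, smul_eq_mul, volume_square hℓ, mul_comm, ← div_eq_mul_inv,
    ENNReal.ofReal_div_of_pos (by positivity), Measure.restrict_eq_self _ hSℓ]
  gcongr

/-- The points of the square `[0, ℓ]²` at distance at least `ε` from its sides. -/
def innerSquare (ℓ ε : ℝ) : Set Plane := {p | p 0 ∈ Icc ε (ℓ - ε) ∧ p 1 ∈ Icc ε (ℓ - ε)}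

theorem mem_square_of_norm_sub_le {x y : Plane} (hx : x ∈ innerSquare ℓ ε) (hy : ‖y - x‖ ≤ ε) :
    y ∈ square ℓ := by
  have abs_coord_le (i : Fin 2) : |y i - x i| ≤ ε := (PiLp.norm_apply_le (y - x) i).trans hy
  have h₀ := abs_le.1 (abs_coord_le 0)
  have h₁ := abs_le.1 (abs_coord_le 1)
  exact ⟨⟨by linarith [hx.1.1], by linarith [hx.1.2]⟩, by linarith [hx.2.1], by linarith [hx.2.2]⟩

theorem measurableSet_innerSquare (ℓ ε : ℝ) : MeasurableSet (innerSquare ℓ ε) :=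
  .inter (measurableSet_Icc.preimage (by fun_prop)) (measurableSet_Icc.preimage (by fun_prop))

theorem unifSq_real_compl_innerSquare_le (hℓ : 0 < ℓ) (hε : 0 ≤ ε) (hεℓ : 2 * ε ≤ ℓ) :
    (unifSq ℓ).real (innerSquare ℓ ε)ᶜ ≤ 4 * ε / ℓ := by
  have := isProbabilityMeasure_unifSq hℓ
  have inner_subset : innerSquare ℓ ε ⊆ square ℓ := fun x hx =>
    mem_square_of_norm_sub_le hx (by simpa)
  have le_inner := le_unifSq_real_of_le_volume hℓ inner_subset
    (volume_setOf_coord_mem_Icc (by linarith) ε (ℓ - ε)).ge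
  calc (unifSq ℓ).real (innerSquare ℓ ε)ᶜ = 1 - (unifSq ℓ).real (innerSquare ℓ ε) :=
        probReal_compl_eq_one_sub (measurableSet_innerSquare ℓ ε)
    _ ≤ 1 - (ℓ - ε - ε) * (ℓ - ε - ε) / ℓ ^ 2 := by gcongr
    _ = 4 * ε / ℓ - (2 * ε / ℓ) ^ 2 := by
        field_simp
        ring
    _ ≤ 4 * ε / ℓ := sub_le_self _ (sq_nonneg _)

theorem measurableSet_nearlyAntipodal (ε : ℝ) (x : Plane) :
    MeasurableSet {p : Plane × Plane | NearlyAntipodal ε (p.1 - x) (p.2 - x)} :=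
  ((NearlyAntipodal.isClosed_setOf ε).preimage
    (f := fun p : Plane × Plane => (p.1 - x, p.2 - x)) (by fun_prop)).measurableSet

theorem unifSq_real_nearlyAntipodal_le (hℓ : 0 < ℓ) (hε : 0 < ε) (x y : Plane) :
    (unifSq ℓ).real {z | NearlyAntipodal ε (y - x) (z - x)} ≤ 8 * ε ^ 3 / ℓ ^ 2 :=
  unifSq_real_le_of_volume_le hℓ (by positivity) <|
    (volume_setOf_sub_mem {q | NearlyAntipodal ε (y - x) q} x).trans_le
      (volume_nearlyAntipodal_le hε _)

theorem le_unifSq_prod_real_nearlyAntipodal (hℓ : 0 < ℓ) (hε : 0 < ε) (hε' : ε ≤ 1 / 8)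
    {x : Plane} (hx : x ∈ innerSquare ℓ ε) :
    ε ^ 5 / (16 * ℓ ^ 4) ≤ ((unifSq ℓ).prod (unifSq ℓ)).real
      {p | NearlyAntipodal ε (p.1 - x) (p.2 - x)} := by
  have := isProbabilityMeasure_unifSq hℓ
  let corner : Set Plane := {p | p 0 ∈ Icc (ε / 2) (3 / 4 * ε) ∧ p 1 ∈ Icc 0 (ε / 2)}
  have norm_mem {p : Plane} (hp : p ∈ corner) : ε / 2 ≤ ‖p‖ ∧ ‖p‖ ≤ ε := by
    obtain ⟨⟨h₀, h₀'⟩, h₁, h₁'⟩ := hp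
    have norm_p_sq : ‖p‖ ^ 2 = p 0 ^ 2 + p 1 ^ 2 := by
      simp [EuclideanSpace.norm_sq_eq, Fin.sum_univ_two]
    exact ⟨le_of_sq_le_sq (by nlinarith) (norm_nonneg p), le_of_sq_le_sq (by nlinarith) hε.le⟩
  have le_corner : ε ^ 2 / 8 / ℓ ^ 2 ≤ (unifSq ℓ).real {y | y - x ∈ corner} := by
    refine le_unifSq_real_of_le_volume (S := {y | y - x ∈ corner}) hℓ
      (fun y hy => mem_square_of_norm_sub_le hx (norm_mem hy).2) ?_
    rw [volume_setOf_sub_mem, volume_setOf_coord_mem_Icc (by linarith)]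
    exact ENNReal.ofReal_le_ofReal (by linarith)
  have le_section (y : Plane) (hy : y - x ∈ corner) :
      ε ^ 3 / 2 / ℓ ^ 2 ≤ (unifSq ℓ).real {z | NearlyAntipodal ε (y - x) (z - x)} := by
    refine le_unifSq_real_of_le_volume hℓ
      (fun z hz => mem_square_of_norm_sub_le hx hz.norm_right_le) ?_
    exact (le_volume_nearlyAntipodal hε hε' (norm_mem hy).1 (norm_mem hy).2).trans_eq
      (volume_setOf_sub_mem {q | NearlyAntipodal ε (y - x) q} x).symm
  calc ε ^ 5 / (16 * ℓ ^ 4) = ε ^ 2 / 8 / ℓ ^ 2 * (ε ^ 3 / 2 / ℓ ^ 2) := by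
        field_simp
        ring
    _ ≤ (unifSq ℓ).real {y | y - x ∈ corner} * (ε ^ 3 / 2 / ℓ ^ 2) := by gcongr
    _ ≤ _ := measureReal_mul_le_prod_measureReal (measurableSet_nearlyAntipodal ε x) le_section

/-- The pairs `(p, w)` for which `w` lies in the unit disk around `x`, but in neither of the unit
disks around `p.1` and `p.2`. -/
def uncovered (x : Plane) : Set ((Plane × Plane) × Plane) :=
  {r | dist x r.2 ≤ 1 ∧ 1 < dist r.1.1 r.2 ∧ 1 < dist r.1.2 r.2}

theorem measurableSet_uncovered (x : Plane) : MeasurableSet (uncovered x) := by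
  simp only [uncovered, ofPred_and]
  exact (measurableSet_le (by fun_prop) measurable_const).inter <|
    (measurableSet_lt measurable_const (by fun_prop)).inter
      (measurableSet_lt measurable_const (by fun_prop))

theorem unifSq_real_uncovered_le (hℓ : 0 < ℓ) (hε : 0 < ε) (hε' : ε ≤ 1 / 8) {x : Plane}
    {p : Plane × Plane} (hp : NearlyAntipodal ε (p.1 - x) (p.2 - x)) :
    (unifSq ℓ).real {w | (p, w) ∈ uncovered x} ≤ 4840 * ε ^ 3 / ℓ ^ 2 := by
  refine unifSq_real_le_of_volume_le hℓ (by positivity)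
    ((volume_setOf_sub_mem _ x ▸ hp.volume_uncovered_le hε hε').trans' (measure_mono ?_))
  intro w hw
  simpa [uncovered, dist_eq_norm, norm_sub_rev _ w] using hw

end UniformSquare

section Rule2

variable {n : ℕ} {ω : Fin n → Plane} {i a b : Fin n}

theorem mem_nbhd_iff {j : Fin n} : j ∈ nbhd ω i ↔ dist (ω i) (ω j) ≤ 1 := by
  by_cases h : j = i <;> simp [nbhd, h]

theorem measurableSet_pruned (i : Fin n) : MeasurableSet {ω : Fin n → Plane | Pruned ω i} := by
  have measurable_adj (j k : Fin n) : Measurable fun ω : Fin n → Plane => dist (ω j) (ω k) ≤ 1 :=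
    measurableSet_setOfPred.1 (measurableSet_le (by fun_prop) measurable_const)
  simp only [Pruned, Set.subset_def, mem_union, mem_nbhd_iff]
  refine measurableSet_setOfPred.2 <| .exists fun i₁ => .exists fun i₂ => ?_
  exact measurable_const.and <| measurable_const.and <| (measurable_adj i i₁).and <|
    (measurable_adj i i₂).and <| (measurable_adj i₁ i₂).and <| .forall fun k =>
      (measurable_adj i k).imp ((measurable_adj i₁ k).or (measurable_adj i₂ k))

theorem exists_uncovered_of_not_pruned (h : ¬ Pruned ω i) (hia : i < a) (hab : a < b)
    (ha : dist (ω i) (ω a) ≤ 1) (hb : dist (ω i) (ω b) ≤ 1) (hdist : dist (ω a) (ω b) ≤ 1) :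
    ∃ k, dist (ω i) (ω k) ≤ 1 ∧ 1 < dist (ω a) (ω k) ∧ 1 < dist (ω b) (ω k) := by
  by_contra! covered
  refine h ⟨b, a, hia, hab, mem_nbhd_iff.2 hb, mem_nbhd_iff.2 ha, dist_comm (ω a) _ ▸ hdist,
    fun k hk => ?_⟩
  simp only [mem_union, mem_nbhd_iff] at hk ⊢
  exact or_iff_not_imp_right.2 fun hak => covered k hk (not_le.1 hak)

theorem exists_uncovered_of_not_pruned_of_nearlyAntipodal {ε : ℝ} (hε' : ε ≤ 1 / 8)
    (h : ¬ Pruned ω i) (hia : i < a) (hab : a < b)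
    (hp : NearlyAntipodal ε (ω a - ω i) (ω b - ω i)) :
    ∃ k, k ≠ i ∧ k ≠ a ∧ k ≠ b ∧ ((ω a, ω b), ω k) ∈ uncovered (ω i) := by
  have dist_a : dist (ω i) (ω a) ≤ 1 / 8 := by
    rw [dist_eq_norm_sub']
    exact hp.norm_left_le.trans hε'
  have dist_b : dist (ω i) (ω b) ≤ 1 / 8 := by
    rw [dist_eq_norm_sub']
    exact hp.norm_right_le.trans hε'
  obtain ⟨k, hik, hak, hbk⟩ := exists_uncovered_of_not_pruned h hia hab (by linarith)
    (by linarith) (by linarith [dist_triangle_left (ω a) (ω b) (ω i)])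
  refine ⟨k, ?_, ?_, ?_, hik, hak, hbk⟩ <;> rintro rfl
  · linarith [dist_comm (ω k) (ω a)]
  · linarith [dist_self (ω k)]
  · linarith [dist_self (ω k)]

end Rule2

section NotPruned

variable {n M : ℕ} {ℓ ε t : ℝ} {i : Fin n}

instance isProbabilityMeasure_gMeasure [IsProbabilityMeasure (unifSq ℓ)] :
    IsProbabilityMeasure (gMeasure n ℓ) :=
  inferInstanceAs (IsProbabilityMeasure (Measure.pi fun _ => unifSq ℓ))

theorem setOf_not_pruned_update_subset (hε' : ε ≤ 1 / 8) {A B : Finset (Fin n)}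
    (hAB : ∀ a ∈ A, ∀ b ∈ B, i < a ∧ a < b) (x : Plane) :
    {ω : Fin n → Plane | ¬ Pruned (Function.update ω i x) i} ⊆
      {ω | ∀ p ∈ A ×ˢ B, ω ∈ pairEvent {p | NearlyAntipodal ε (p.1 - x) (p.2 - x)} p →
        ω ∈ hitEvent (uncovered x) p} := by
  rintro ω hω ⟨a, b⟩ hp hG
  obtain ⟨hia, hab⟩ := hAB a (Finset.mem_product.1 hp).1 b (Finset.mem_product.1 hp).2
  have update_a : Function.update ω i x a = ω a := Function.update_of_ne hia.ne' ..
  have update_b : Function.update ω i x b = ω b := Function.update_of_ne (hia.trans hab).ne' ..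
  obtain ⟨k, hki, hka, hkb, hk⟩ := exists_uncovered_of_not_pruned_of_nearlyAntipodal hε' hω hia hab
    (by rw [update_a, update_b, Function.update_self]; exact hG)
  rw [update_a, update_b, Function.update_self, Function.update_of_ne hki] at hk
  exact ⟨k, hka, hkb, hk⟩

theorem measureReal_not_pruned_update_le (hℓ : 0 < ℓ) (hε : 0 < ε) (hε' : ε ≤ 1 / 8)
    (hM : 0 < M) (hi : (i : ℕ) + 2 * M < n) {x : Plane} (hx : x ∈ innerSquare ℓ ε) :
    (gMeasure n ℓ).real {ω | ¬ Pruned (Function.update ω i x) i} ≤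
      4 * (1 + (M + M) * (8 * ε ^ 3 / ℓ ^ 2)) / (M * M * (ε ^ 5 / (16 * ℓ ^ 4))) +
        2 * (n * (4840 * ε ^ 3 / ℓ ^ 2)) := by
  have := isProbabilityMeasure_unifSq hℓ
  have : (0 : ℝ) < M := mod_cast hM
  let A : Finset (Fin n) := Finset.Ioc i ⟨i + M, by omega⟩
  let B : Finset (Fin n) := Finset.Ioc ⟨i + M, by omega⟩ ⟨i + 2 * M, hi⟩
  have hAB (a) (ha : a ∈ A) (b) (hb : b ∈ B) : i < a ∧ a < b :=
    ⟨(Finset.mem_Ioc.1 ha).1, (Finset.mem_Ioc.1 ha).2.trans_lt (Finset.mem_Ioc.1 hb).1⟩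
  have card_A : A.card = M := by simp [A]
  have card_B : B.card = M := by
    simp only [B, Fin.card_Ioc]
    omega
  have pairs_hit := measureReal_forall_pair_hit_le (μ := unifSq ℓ) (A := A) (B := B)
    (measurableSet_nearlyAntipodal ε x) (measurableSet_uncovered x) (by positivity)
    (unifSq_real_nearlyAntipodal_le hℓ hε x)
    (fun z => (measureReal_mono fun _ hy => hy.symm).trans
      (unifSq_real_nearlyAntipodal_le hℓ hε x z))
    (by positivity) (fun _ hp => unifSq_real_uncovered_le hℓ hε hε' hp)
    ((by positivity : 0 < ε ^ 5 / (16 * ℓ ^ 4)).trans_le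
      (le_unifSq_prod_real_nearlyAntipodal hℓ hε hε' hx))
    (Finset.card_pos.1 (card_A ▸ hM)) (Finset.card_pos.1 (card_B ▸ hM))
    (Finset.disjoint_left.2 fun a ha hb => (hAB a ha a hb).2.false)
  rw [card_A, card_B, Fintype.card_fin] at pairs_hit
  refine (measureReal_mono (setOf_not_pruned_update_subset hε' hAB x)).trans
    (pairs_hit.trans ?_)
  gcongr
  exact le_unifSq_prod_real_nearlyAntipodal hℓ hε hε' hx

theorem measureReal_not_pruned_update_le_mul (hℓ : 0 < ℓ) (ht : 0 < t) (ht' : t ≤ 1 / 2)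
    (hnt : n * t ^ 14 = ℓ ^ 2) (hM : t * n ≤ M) (hi : (i : ℕ) + 2 * M < n) {x : Plane}
    (hx : x ∈ innerSquare ℓ (t ^ 5)) :
    (gMeasure n ℓ).real {ω | ¬ Pruned (Function.update ω i x) i} ≤ 10768 * t := by
  have hn : (0 : ℝ) < n := mod_cast i.pos
  have hM₀ : 0 < (M : ℝ) := (mul_pos ht hn).trans_le hM
  -- The scale `t ^ 5` for `ε`, together with `hnt`, makes the dominant error terms of order `t`.
  have few_pairs : 4 / (M * M * ((t ^ 5) ^ 5 / (16 * ℓ ^ 4))) ≤ 64 * t := by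
    calc _ ≤ 4 / (t * n * (t * n) * ((t ^ 5) ^ 5 / (16 * ℓ ^ 4))) := by gcongr
      _ = 64 * t * (ℓ ^ 2 / (n * t ^ 14)) ^ 2 := by
          field_simp
          norm_num
      _ = 64 * t := by
          rw [hnt, div_self (by positivity)]
          ring
  have overlaps : 4 * ((M + M) * (8 * (t ^ 5) ^ 3 / ℓ ^ 2)) /
      (M * M * ((t ^ 5) ^ 5 / (16 * ℓ ^ 4))) ≤ 1024 * t := by
    calc _ = 1024 * ℓ ^ 2 / (M * t ^ 10) := by
          field_simp
          norm_num
      _ ≤ 1024 * ℓ ^ 2 / (t * n * t ^ 10) := by gcongr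
      _ = 1024 * t ^ 3 * (ℓ ^ 2 / (n * t ^ 14)) := by field_simp
      _ = 1024 * t ^ 3 := by rw [hnt, div_self (by positivity), mul_one]
      _ ≤ 1024 * t := by
          gcongr
          exact pow_le_of_le_one ht.le (by linarith) three_ne_zero
  have hits : 2 * (n * (4840 * (t ^ 5) ^ 3 / ℓ ^ 2)) = 9680 * t := by
    rw [← hnt]
    field_simp
    norm_num
  refine (measureReal_not_pruned_update_le hℓ (by positivity)
    (by linarith [pow_le_pow_left₀ ht.le ht' 5]) (mod_cast hM₀) hi hx).trans ?_
  rw [mul_add, mul_one, add_div, hits]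
  linarith

theorem measureReal_not_pruned_le (hℓ : 1 ≤ ℓ) (ht : 0 < t) (ht' : t ≤ 1 / 2)
    (hnt : n * t ^ 14 = ℓ ^ 2) (hM : t * n ≤ M) (hi : (i : ℕ) + 2 * M < n) :
    (gMeasure n ℓ).real {ω | ¬ Pruned ω i} ≤ 10772 * t := by
  have hℓ₀ : 0 < ℓ := by positivity
  have := isProbabilityMeasure_unifSq hℓ₀
  have pow_le : t ^ 5 ≤ t := pow_le_of_le_one ht.le (by linarith) (by norm_num)
  calc (gMeasure n ℓ).real {ω | ¬ Pruned ω i}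
      ≤ (unifSq ℓ).real (innerSquare ℓ (t ^ 5))ᶜ + 10768 * t :=
        measureReal_pi_le_add i (measurableSet_pruned i).compl (by positivity) fun x hx =>
          measureReal_not_pruned_update_le_mul hℓ₀ ht ht' hnt hM hi (not_not.1 hx)
    _ ≤ 4 * t ^ 5 / ℓ + 10768 * t := by
        gcongr
        exact unifSq_real_compl_innerSquare_le hℓ₀ (by positivity) (by linarith)
    _ ≤ 4 * t / 1 + 10768 * t := by gcongr
    _ = 10772 * t := by ring

end NotPruned

section ExpectedSize

variable {n : ℕ} {ℓ : ℝ}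

theorem natCast_sub_U (ω : Fin n → Plane) :
    (n : ℝ) - U n ω = ∑ i, {ω | ¬ Pruned ω i}.indicator (1 : (Fin n → Plane) → ℝ) ω := by
  classical
  have ncard_add_ncard := ncard_add_ncard_compl {i | Pruned ω i}
  rw [Nat.card_eq_fintype_card, Fintype.card_fin] at ncard_add_ncard
  calc (n : ℝ) - U n ω = ({i | Pruned ω i}ᶜ.ncard : ℝ) := by
        rw [sub_eq_iff_eq_add', U, ← Nat.cast_add, ncard_add_ncard]
    _ = ∑ i, {ω | ¬ Pruned ω i}.indicator (1 : (Fin n → Plane) → ℝ) ω := by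
        simp [indicator_apply, compl_ofPred, ncard_eq_toFinset_card', Finset.sum_ite]

theorem integral_natCast_sub_U (hℓ : 0 < ℓ) :
    ∫ ω, ((n : ℝ) - U n ω) ∂gMeasure n ℓ = ∑ i, (gMeasure n ℓ).real {ω | ¬ Pruned ω i} := by
  have := isProbabilityMeasure_unifSq hℓ
  simp only [natCast_sub_U]
  exact integral_sum_indicator_one _ fun i => (measurableSet_pruned i).compl

theorem card_filter_le_val_add_le (n m : ℕ) :
    (Finset.univ.filter fun i : Fin n => n ≤ i + m).card ≤ m := by
  rw [← Finset.card_map Fin.valEmbedding]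
  refine (Finset.card_le_card (t := Finset.Ico (n - m) n) fun k hk => ?_).trans ?_
  · obtain ⟨i, hi, rfl⟩ := Finset.mem_map.1 hk
    have := (Finset.mem_filter.1 hi).2
    rw [Fin.valEmbedding_apply, Finset.mem_Ico]
    omega
  · rw [Nat.card_Ico]
    omega

theorem integral_natCast_sub_U_le_of_mul_pow_eq {t : ℝ} (hℓ : 1 ≤ ℓ) (ht : 0 < t)
    (hnt : n * t ^ 14 = ℓ ^ 2) : ∫ ω, ((n : ℝ) - U n ω) ∂gMeasure n ℓ ≤ 11000 * t * n := by
  have := isProbabilityMeasure_unifSq (zero_lt_one.trans_le hℓ)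
  rw [integral_natCast_sub_U (zero_lt_one.trans_le hℓ)]
  rcases le_or_gt t (1 / 2) with ht' | ht'
  swap
  · calc ∑ i, (gMeasure n ℓ).real {ω | ¬ Pruned ω i} ≤ ∑ _ : Fin n, (1 : ℝ) :=
          Finset.sum_le_sum fun _ _ => measureReal_le_one
      _ = 1 * n := by simp
      _ ≤ 11000 * t * n := by
          gcongr
          linarith
  have one_le_tn : 1 ≤ t * n := calc
    1 ≤ ℓ ^ 2 := one_le_pow₀ hℓ
    _ = t ^ 14 * n := by rw [← hnt, mul_comm]
    _ ≤ t * n := by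
        gcongr
        exact pow_le_of_le_one ht.le (by linarith) (by norm_num)
  set M := ⌈t * n⌉₊
  have M_le : (M : ℝ) ≤ t * n + 1 := (Nat.ceil_lt_add_one (by positivity)).le
  have not_pruned_le (i : Fin n) : (gMeasure n ℓ).real {ω | ¬ Pruned ω i} ≤
      10772 * t + if n ≤ i + 2 * M then 1 else 0 := by
    split_ifs with hi
    · linarith [measureReal_le_one (μ := gMeasure n ℓ) (s := {ω | ¬ Pruned ω i})]
    · rw [add_zero]
      exact measureReal_not_pruned_le hℓ ht ht' hnt (Nat.le_ceil _) (not_le.1 hi)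
  calc ∑ i, (gMeasure n ℓ).real {ω | ¬ Pruned ω i}
      ≤ ∑ i : Fin n, (10772 * t + if n ≤ i + 2 * M then 1 else 0) :=
        Finset.sum_le_sum fun i _ => not_pruned_le i
    _ = n * (10772 * t) + (Finset.univ.filter fun i : Fin n => n ≤ i + 2 * M).card := by
        simp [Finset.sum_add_distrib]
    _ ≤ n * (10772 * t) + (2 * M : ℕ) := by
        gcongr
        exact card_filter_le_val_add_le n (2 * M)
    _ ≤ 11000 * t * n := by
        push_cast
        linarith

theorem integral_natCast_sub_U_le (hn : 0 < n) (hℓ : 1 ≤ ℓ) :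
    ∫ ω, ((n : ℝ) - U n ω) ∂gMeasure n ℓ ≤ 11000 * (ℓ ^ 2 / n) ^ (1 / 14 : ℝ) * n := by
  refine integral_natCast_sub_U_le_of_mul_pow_eq hℓ (by positivity) ?_
  rw [← rpow_natCast, ← rpow_mul (by positivity)]
  norm_num
  field_simp

end ExpectedSize

section Asymptotics

open Filter

theorem tendsto_log_natCast_atTop : Tendsto (fun n : ℕ => log n) atTop atTop :=
  tendsto_log_atTop.comp tendsto_natCast_atTop_atTop

theorem eventually_mul_div_log_rpow_le (C s : ℝ) {r : ℝ} (hr : 0 < r) :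
    ∀ᶠ n : ℕ in atTop, C * n / log n ^ r ≤ n / log (log n) ^ s := by
  have hC : (0 : ℝ) < (|C| + 1)⁻¹ := by positivity
  filter_upwards [tendsto_log_natCast_atTop.eventually
      ((isLittleO_log_rpow_rpow_atTop s hr).bound hC),
    tendsto_log_natCast_atTop.eventually_gt_atTop 1] with n h hlog
  have : 0 < log (log n) := log_pos hlog
  rw [norm_of_nonneg (by positivity), norm_of_nonneg (by positivity),
    le_inv_mul_iff₀ (by positivity)] at h
  rw [div_le_div_iff₀ (by positivity) (by positivity), mul_right_comm, mul_comm (n : ℝ)]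
  gcongr
  exact h.trans' (by gcongr; linarith [le_abs_self C])

theorem expected_dominating_set_upper_bound_general {c : ℝ} {ℓ : ℕ → ℝ}
    (hℓ : ∀ᶠ n : ℕ in atTop, 1 ≤ ℓ n ∧ ℓ n ≤ c * √(n / log n)) :
    ∀ᶠ n : ℕ in atTop, ∫ ω, ((n : ℝ) - U n ω) ∂gMeasure n (ℓ n) ≤
      11000 * (c ^ 2) ^ (1 / 14 : ℝ) * n / log n ^ (1 / 14 : ℝ) := by
  filter_upwards [hℓ, eventually_gt_atTop 1] with n ⟨one_le, le_mul_sqrt⟩ hn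
  have log_pos : 0 < log n := log_pos (mod_cast hn)
  have sq_le : ℓ n ^ 2 / n ≤ c ^ 2 / log n := by
    rw [div_le_iff₀ (by positivity)]
    calc ℓ n ^ 2 ≤ (c * √(n / log n)) ^ 2 := by gcongr
      _ = c ^ 2 / log n * n := by
          rw [mul_pow, sq_sqrt (by positivity)]
          ring
  calc _ ≤ 11000 * (ℓ n ^ 2 / n) ^ (1 / 14 : ℝ) * n :=
        integral_natCast_sub_U_le (by positivity) one_le
    _ ≤ 11000 * (c ^ 2 / log n) ^ (1 / 14 : ℝ) * n := by gcongr
    _ = _ := by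
        rw [div_rpow (sq_nonneg c) log_pos.le]
        ring

end Asymptotics

/-- Under the stated conditions on `⟨ℓ_n⟩`, there is `K > 0` such that for all
sufficiently large `n`, the expected size `E(C) = E(n − U)` of the Rule 2 dominating set is at
most `K n / (log log n)^{3/2}`. -/
theorem expected_dominating_set_upper_bound (cbar : ℝ) (hcbar : 0 < cbar) (ℓ : ℕ → ℝ)
    (hmono : Monotone ℓ)
    (hℓ : ∀ n : ℕ, 1 < n → Real.log n ≤ ℓ n ∧ ℓ n ≤ cbar * Real.sqrt (n / Real.log n)) :
    ∃ K > (0 : ℝ), ∀ᶠ n : ℕ in Filter.atTop,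
      (∫ ω, ((n : ℝ) - (U n ω : ℝ)) ∂(gMeasure n (ℓ n))) ≤
        K * n / (Real.log (Real.log n)) ^ (3/2 : ℝ) := by
  refine ⟨1, one_pos, ?_⟩
  have one_le : ∀ᶠ n : ℕ in Filter.atTop, 1 ≤ ℓ n ∧ ℓ n ≤ cbar * √(n / log n) := by
    filter_upwards [tendsto_log_natCast_atTop.eventually_ge_atTop 1, Filter.eventually_gt_atTop 1]
      with n hlog hn using ⟨hlog.trans (hℓ n hn).1, (hℓ n hn).2⟩
  filter_upwards [expected_dominating_set_upper_bound_general one_le,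
    eventually_mul_div_log_rpow_le (r := 1 / 14) (11000 * (cbar ^ 2) ^ (1 / 14 : ℝ)) (3 / 2)
      (by norm_num)] with n h h'
  simpa only [one_mul] using h.trans h'
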